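/- Let λ > 1, let A and B be complete metric spaces, let S : A → A be a λ-expansion (S bijective with dist(S x, S y) = λ · dist(x, y)) and T : B → B a λ⁻¹-contraction (T bijective with dist(T x, T y) = λ⁻¹ · dist(x, y)), and let Φ : A × B → A × B be the split hyperbolic homeomorphism Φ(a, b) = (S a, T b), where A × B carries the sup metric dist((a,b),(a',b')) = max(dist(a,a'), dist(b,b')). Then for every δ > 0 and every δ-pseudo-orbit (z_n)_{n∈ℤ} of Φ (i.e. dist(Φ(z_n), z_{n+1}) ≤ δ for all n ∈ ℤ) there exists a point z ∈ A × B with dist(Φⁿ z, z_n) ≤ λδ/(λ−1) for all n ∈ ℤ; moreover z is the unique point satisfying sup_{n∈ℤ} dist(Φⁿ z, z_n) < ∞. -/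

import Mathlib

/-! Orbits of `S × T` are the fixed points of the map sending a sequence `(aₙ, bₙ)` to
`(S⁻¹ aₙ₊₁, T bₙ₋₁)`: looking forward in the expanding factor and backward in the contracting one
makes this map a contraction for the supremum distance on sequences. It moves a `δ`-pseudo-orbit by
at most `δ`, so Banach's theorem yields an orbit at distance at most `δ / (1 - lam⁻¹)`, the only one
at finite distance. The supremum distance between sequences may be infinite, hence the use of
extended metrics. -/

open Function UniformFun
open scoped ENNReal NNReal UniformConvergence

section OrbitTransform

variable {A B : Type*}

/-- The transform of sequences in `A × B` whose fixed points, when `R` is the inverse of `S`, are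
the two-sided orbits of `S × T`. The sequences are taken in `ℤ →ᵤ A × B` to equip them with the
supremum distance. -/
def orbitTransform (R : A → A) (T : B → B) (y : ℤ →ᵤ A × B) : ℤ →ᵤ A × B :=
  ofFun fun n ↦ (R (toFun y (n + 1)).1, T (toFun y (n - 1)).2)

lemma isFixedPt_orbitTransform_iff {S : Equiv.Perm A} {T : B → B} {y : ℤ →ᵤ A × B} :
    IsFixedPt (orbitTransform S.symm T) y ↔
      ∀ n, toFun y (n + 1) = Prod.map S T (toFun y n) := by
  have coordinates : IsFixedPt (orbitTransform S.symm T) y ↔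
      ∀ n, S.symm (toFun y (n + 1)).1 = (toFun y n).1 ∧
        T (toFun y (n - 1)).2 = (toFun y n).2 := by
    simp only [← Prod.mk_inj]
    exact funext_iff
  have shift : (∀ n, T (toFun y (n - 1)).2 = (toFun y n).2) ↔
      ∀ n, (toFun y (n + 1)).2 = T (toFun y n).2 :=
    (Equiv.addRight (1 : ℤ)).forall_congr_right.symm.trans <| by simp [eq_comm]
  rw [coordinates, forall_and, shift, ← forall_and]
  simp only [Prod.ext_iff, Prod.map_fst, Prod.map_snd, Equiv.symm_apply_eq]

variable [PseudoEMetricSpace A] [PseudoEMetricSpace B]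

lemma lipschitzWith_orbitTransform {K : ℝ≥0} {R : A → A} {T : B → B} (hR : LipschitzWith K R)
    (hT : LipschitzWith K T) : LipschitzWith K (orbitTransform R T) := fun _ _ ↦
  edist_le.2 fun _ ↦ max_le
    ((hR _ _).trans <| mul_right_mono <| (le_max_left _ _).trans edist_eval_le)
    ((hT _ _).trans <| mul_right_mono <| (le_max_right _ _).trans edist_eval_le)

lemma edist_orbitTransform_le {S : Equiv.Perm A} {T : B → B} (hS : LipschitzWith 1 S.symm)
    {z : ℤ →ᵤ A × B} {δ : ℝ≥0∞}
    (hz : ∀ n, edist (Prod.map S T (toFun z n)) (toFun z (n + 1)) ≤ δ) :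
    edist z (orbitTransform S.symm T z) ≤ δ := by
  refine edist_le.2 fun n ↦ max_le ?_ ?_
  · calc edist (toFun z n).1 (S.symm (toFun z (n + 1)).1)
        = edist (S.symm (S (toFun z n).1)) (S.symm (toFun z (n + 1)).1) := by
          rw [S.symm_apply_apply]
      _ ≤ edist (S (toFun z n).1) (toFun z (n + 1)).1 := by
          simpa only [ENNReal.coe_one, one_mul] using hS (S (toFun z n).1) (toFun z (n + 1)).1
      _ ≤ δ := (le_max_left _ _).trans (hz n)
  · have backward := (le_max_right _ _).trans (hz (n - 1))
    rwa [sub_add_cancel, edist_comm] at backward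

end OrbitTransform

lemma forall_add_one_eq_apply_iff {X : Type*} {e : Equiv.Perm X} {y : ℤ → X} :
    (∀ n, y (n + 1) = e (y n)) ↔ ∀ n, y n = (e ^ n) (y 0) := by
  refine ⟨fun h n ↦ ?_, fun h n ↦ ?_⟩
  · induction n with
    | zero => simp
    | succ n ih => rw [h, ih, add_comm, zpow_one_add, Equiv.Perm.mul_apply]
    | pred n ih =>
      apply e.injective
      rw [← h, sub_add_cancel, ih, ← Equiv.Perm.mul_apply, ← zpow_one_add, add_sub_cancel]
  · rw [h (n + 1), h n, add_comm, zpow_one_add, Equiv.Perm.mul_apply]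

lemma isFixedPt_orbitTransform_iff_zpow {A B : Type*} {S : Equiv.Perm A} {T : Equiv.Perm B}
    {y : ℤ →ᵤ A × B} :
    IsFixedPt (orbitTransform S.symm T) y ↔
      ∀ n, toFun y n = (S.prodCongr T ^ n) (toFun y 0) :=
  isFixedPt_orbitTransform_iff.trans (forall_add_one_eq_apply_iff (e := S.prodCongr T))

lemma exists_unique_isFixedPt_edist_le {X : Type*} [EMetricSpace X] [CompleteSpace X] {K : ℝ≥0}
    {f : X → X} (hf : ContractingWith K f) {x : X} {δ : ℝ≥0∞} (hδ : δ ≠ ∞)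
    (hx : edist x (f x) ≤ δ) :
    ∃ y, IsFixedPt f y ∧ edist x y ≤ δ / (1 - K) ∧
      ∀ w, IsFixedPt f w → edist x w ≠ ∞ → w = y := by
  have hx_ne_top := ne_top_of_le_ne_top hδ hx
  have fixed := hf.efixedPoint_isFixedPt hx_ne_top
  refine ⟨ContractingWith.efixedPoint f hf x hx_ne_top, fixed,
    (hf.edist_efixedPoint_le hx_ne_top).trans (ENNReal.div_le_div_right hx _),
    fun w w_fixed hw ↦ ?_⟩
  refine (hf.eq_or_edist_eq_top_of_fixedPoints w_fixed fixed).resolve_right ?_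
  refine ne_top_of_le_ne_top ?_ (edist_triangle_left _ _ x)
  exact ENNReal.add_ne_top.2 ⟨hw, (hf.edist_efixedPoint_lt_top hx_ne_top).ne⟩

theorem exists_unique_shadow_prodCongr {A B : Type*} [EMetricSpace A] [CompleteSpace A]
    [EMetricSpace B] [CompleteSpace B] {K : ℝ≥0} (hK : K < 1) {S : Equiv.Perm A}
    {T : Equiv.Perm B} (hS : LipschitzWith K S.symm) (hT : LipschitzWith K T) {δ : ℝ≥0∞}
    (hδ : δ ≠ ∞) {z : ℤ → A × B} (hz : ∀ n, edist (S.prodCongr T (z n)) (z (n + 1)) ≤ δ) :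
    ∃ p, (∀ n : ℤ, edist (z n) ((S.prodCongr T ^ n) p) ≤ δ / (1 - K)) ∧
      ∀ q, (∃ C ≠ ∞, ∀ n : ℤ, edist (z n) ((S.prodCongr T ^ n) q) ≤ C) → q = p := by
  obtain ⟨y, y_fixed, y_near, y_unique⟩ := exists_unique_isFixedPt_edist_le
    ⟨hK, lipschitzWith_orbitTransform hS hT⟩ hδ
    (edist_orbitTransform_le (z := ofFun z) (hS.weaken hK.le) hz)
  refine ⟨toFun y 0, fun n ↦ ?_, fun q ⟨C, hC, hq⟩ ↦ ?_⟩
  · rw [← isFixedPt_orbitTransform_iff_zpow.1 y_fixed]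
    exact edist_le.1 y_near n
  · have orbit_eq : ofFun (fun n : ℤ ↦ (S.prodCongr T ^ n) q) = y :=
      y_unique _ (isFixedPt_orbitTransform_iff_zpow.2 fun _ ↦ rfl)
        (ne_top_of_le_ne_top hC (edist_le.2 hq))
    exact congrArg (toFun · 0) orbit_eq

lemma ofReal_div_one_sub_toNNReal_inv {lam : ℝ} (hlam : 1 < lam) (δ : ℝ) :
    ENNReal.ofReal δ / (1 - (lam⁻¹.toNNReal : ℝ≥0∞)) = ENNReal.ofReal (lam * δ / (lam - 1)) := by
  have hlam_inv : lam⁻¹ < 1 := inv_lt_one_of_one_lt₀ hlam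
  calc ENNReal.ofReal δ / (1 - ENNReal.ofReal lam⁻¹)
      = ENNReal.ofReal (δ / (1 - lam⁻¹)) := by
        rw [ENNReal.ofReal_div_of_pos (sub_pos.2 hlam_inv),
          ENNReal.ofReal_sub _ (by positivity), ENNReal.ofReal_one]
    _ = ENNReal.ofReal (lam * δ / (lam - 1)) := by
        congr 1
        field_simp

theorem split_hyperbolic_shadowing_general
    {A B : Type*} [MetricSpace A] [CompleteSpace A] [MetricSpace B] [CompleteSpace B]
    {lam : ℝ} (hlam : 1 < lam) {S : Equiv.Perm A} {T : Equiv.Perm B}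
    (hS : ∀ x y : A, lam * dist x y ≤ dist (S x) (S y))
    (hT : ∀ x y : B, dist (T x) (T y) ≤ lam⁻¹ * dist x y)
    {Φ : Equiv.Perm (A × B)} (hΦ : ∀ p : A × B, Φ p = (S p.1, T p.2))
    {δ : ℝ} {z : ℤ → A × B} (hz : ∀ n : ℤ, dist (Φ (z n)) (z (n + 1)) ≤ δ) :
    ∃ p : A × B, (∀ n : ℤ, dist ((Φ ^ n) p) (z n) ≤ lam * δ / (lam - 1)) ∧
      ∀ q : A × B, (∃ C : ℝ, ∀ n : ℤ, dist ((Φ ^ n) q) (z n) ≤ C) → q = p := by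
  obtain rfl : Φ = S.prodCongr T := Equiv.ext hΦ
  have hδ : 0 ≤ δ := dist_nonneg.trans (hz 0)
  have hS_symm : LipschitzWith lam⁻¹.toNNReal S.symm := .of_dist_le' fun x y ↦ by
    rw [le_inv_mul_iff₀ (by positivity)]
    simpa using hS (S.symm x) (S.symm y)
  obtain ⟨p, hp, p_unique⟩ := exists_unique_shadow_prodCongr
    (Real.toNNReal_lt_one.2 (inv_lt_one_of_one_lt₀ hlam)) hS_symm (.of_dist_le' hT)
    ENNReal.ofReal_ne_top fun n ↦ (edist_le_ofReal hδ).2 (hz n)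
  refine ⟨p, fun n ↦ ?_, fun q ⟨C, hq⟩ ↦
    p_unique q ⟨ENNReal.ofReal C, ENNReal.ofReal_ne_top, fun n ↦ ?_⟩⟩
  · rw [← edist_le_ofReal (div_nonneg (by positivity) (sub_pos.2 hlam).le), edist_comm,
      ← ofReal_div_one_sub_toNNReal_inv hlam]
    exact hp n
  · rw [edist_comm, edist_le_ofReal (dist_nonneg.trans (hq n))]
    exact hq n

/-- the split hyperbolic homeomorphism Φ(a,b) = (S a, T b) on the product
of a complete λ-expansion and a complete λ⁻¹-contraction (sup metric) shadows every
two-sided δ-pseudo-orbit with bound λδ/(λ-1), and the shadowing point is the unique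
point whose orbit stays at finite distance from the pseudo-orbit. -/
theorem split_hyperbolic_shadowing
    {A B : Type*} [MetricSpace A] [CompleteSpace A] [MetricSpace B] [CompleteSpace B]
    (lam : ℝ) (hlam : 1 < lam) (S : Equiv.Perm A) (T : Equiv.Perm B)
    (hS : ∀ x y : A, dist (S x) (S y) = lam * dist x y)
    (hT : ∀ x y : B, dist (T x) (T y) = lam⁻¹ * dist x y)
    (Φ : Equiv.Perm (A × B)) (hΦ : ∀ p : A × B, Φ p = (S p.1, T p.2))
    (δ : ℝ) (hδ : 0 < δ) (z : ℤ → A × B)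
    (hz : ∀ n : ℤ, dist (Φ (z n)) (z (n + 1)) ≤ δ) :
    ∃ p : A × B, (∀ n : ℤ, dist ((Φ ^ n) p) (z n) ≤ lam * δ / (lam - 1)) ∧
      ∀ q : A × B, (∃ C : ℝ, ∀ n : ℤ, dist ((Φ ^ n) q) (z n) ≤ C) → q = p := by
  exact split_hyperbolic_shadowing_general hlam (fun x y ↦ (hS x y).ge)
    (fun x y ↦ (hT x y).le) hΦ hz
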